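/- If the commutative ℤ-graded ring A is Noetherian, then for every w ∈ ℤ the small pre-additive category F_{≥w} is Noetherian, i.e. every submodule of a finitely generated right F_{≥w}-module is finitely generated, and likewise for left F_{≥w}-modules. -/

import Mathlib

/-!
# Statement 7

If the commutative ℤ-graded ring `A` is Noetherian, then for every `w ∈ ℤ` the small
pre-additive category `F_{≥w}` (objects the integers `≥ w`, Hom-groups
`F(i,j) = A_{i-j}`) is Noetherian: every submodule of a finitely generated right
`F_{≥w}`-module is finitely generated, and likewise for left `F_{≥w}`-modules.
-/

universe u

variable {A : Type u} [CommRing A]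

/-- Index set of the full subcategory `F_{≥w} ⊆ F`: the integers `≥ w`. -/
abbrev GeIdx (w : ℤ) := {i : ℤ // w ≤ i}

/-- A right module over the small pre-additive category `F_{≥w}` attached to a commutative
ℤ-graded ring `A` (an additive functor `F_{≥w}^op → Ab`): abelian groups `M i` for
`i ≥ w` together with additive action maps `𝒜 (i-j) → (M j →+ M i)`, unital and
associative for the multiplication of `A`. -/
structure FgeModule (𝒜 : ℤ → AddSubgroup A) [GradedRing 𝒜] (w : ℤ) where
  M : GeIdx w → Type u
  [addCommGroup : ∀ i, AddCommGroup (M i)]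
  act : ∀ i j : GeIdx w, 𝒜 (i.1 - j.1) → (M j →+ M i)
  act_add : ∀ (i j : GeIdx w) (f g : 𝒜 (i.1 - j.1)) (m : M j),
    act i j (f + g) m = act i j f m + act i j g m
  act_one : ∀ (i : GeIdx w) (m : M i),
    act i i ⟨1, by rw [sub_self]; exact SetLike.one_mem_graded 𝒜⟩ m = m
  act_mul : ∀ (i j k : GeIdx w) (f : 𝒜 (i.1 - j.1)) (g : 𝒜 (j.1 - k.1)) (m : M k),
    act i k ⟨(f : A) * (g : A), by
        have h := SetLike.mul_mem_graded f.2 g.2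
        rwa [show i.1 - j.1 + (j.1 - k.1) = i.1 - k.1 by ring] at h⟩ m
      = act i j f (act j k g m)

attribute [instance] FgeModule.addCommGroup

/-- A left module over `F_{≥w}` (an additive functor `F_{≥w} → Ab`): abelian groups `N i`
for `i ≥ w` together with additive action maps `𝒜 (i-j) → (N i →+ N j)`, unital and
associative. -/
structure FgeModuleL (𝒜 : ℤ → AddSubgroup A) [GradedRing 𝒜] (w : ℤ) where
  N : GeIdx w → Type u
  [addCommGroup : ∀ i, AddCommGroup (N i)]
  act : ∀ i j : GeIdx w, 𝒜 (i.1 - j.1) → (N i →+ N j)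
  act_add : ∀ (i j : GeIdx w) (f g : 𝒜 (i.1 - j.1)) (m : N i),
    act i j (f + g) m = act i j f m + act i j g m
  act_one : ∀ (i : GeIdx w) (m : N i),
    act i i ⟨1, by rw [sub_self]; exact SetLike.one_mem_graded 𝒜⟩ m = m
  act_mul : ∀ (i j k : GeIdx w) (f : 𝒜 (i.1 - j.1)) (g : 𝒜 (j.1 - k.1)) (m : N i),
    act i k ⟨(f : A) * (g : A), by
        have h := SetLike.mul_mem_graded f.2 g.2
        rwa [show i.1 - j.1 + (j.1 - k.1) = i.1 - k.1 by ring] at h⟩ m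
      = act j k g (act i j f m)

attribute [instance] FgeModuleL.addCommGroup

variable {𝒜 : ℤ → AddSubgroup A} [GradedRing 𝒜]

/-- A right `F_{≥w}`-module is finitely generated if it admits finitely many homogeneous
generators, i.e. an epimorphism from a finite direct sum of representable modules. -/
def FgeModule.IsFG {w : ℤ} (𝓜 : FgeModule 𝒜 w) : Prop :=
  ∃ (n : ℕ) (deg : Fin n → GeIdx w) (ξ : ∀ s, 𝓜.M (deg s)),
    ∀ (a : GeIdx w) (x : 𝓜.M a),
      ∃ f : ∀ s, 𝒜 (a.1 - (deg s).1), x = ∑ s, 𝓜.act a (deg s) (f s) (ξ s)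

/-- A left `F_{≥w}`-module is finitely generated if it admits finitely many homogeneous
generators. -/
def FgeModuleL.IsFG {w : ℤ} (𝓝 : FgeModuleL 𝒜 w) : Prop :=
  ∃ (n : ℕ) (deg : Fin n → GeIdx w) (ξ : ∀ s, 𝓝.N (deg s)),
    ∀ (a : GeIdx w) (x : 𝓝.N a),
      ∃ f : ∀ s, 𝒜 ((deg s).1 - a.1), x = ∑ s, 𝓝.act (deg s) a (f s) (ξ s)

/-- A submodule of a right `F_{≥w}`-module: subgroups of each weight component, closed
under the action. -/
structure FgeModule.Sub {w : ℤ} (𝓜 : FgeModule 𝒜 w) where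
  carrier : ∀ i, AddSubgroup (𝓜.M i)
  act_mem : ∀ (i j : GeIdx w) (f : 𝒜 (i.1 - j.1)) (m : 𝓜.M j),
    m ∈ carrier j → 𝓜.act i j f m ∈ carrier i

/-- A submodule of a left `F_{≥w}`-module. -/
structure FgeModuleL.Sub {w : ℤ} (𝓝 : FgeModuleL 𝒜 w) where
  carrier : ∀ i, AddSubgroup (𝓝.N i)
  act_mem : ∀ (i j : GeIdx w) (f : 𝒜 (i.1 - j.1)) (m : 𝓝.N i),
    m ∈ carrier i → 𝓝.act i j f m ∈ carrier j

/-- A submodule of a right `F_{≥w}`-module is finitely generated if it has finitely many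
homogeneous generators. -/
def FgeModule.Sub.IsFG {w : ℤ} {𝓜 : FgeModule 𝒜 w} (S : 𝓜.Sub) : Prop :=
  ∃ (n : ℕ) (deg : Fin n → GeIdx w) (ξ : ∀ s, 𝓜.M (deg s)),
    (∀ s, ξ s ∈ S.carrier (deg s)) ∧
      ∀ (a : GeIdx w), ∀ x ∈ S.carrier a,
        ∃ f : ∀ s, 𝒜 (a.1 - (deg s).1), x = ∑ s, 𝓜.act a (deg s) (f s) (ξ s)

/-- A submodule of a left `F_{≥w}`-module is finitely generated if it has finitely many
homogeneous generators. -/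
def FgeModuleL.Sub.IsFG {w : ℤ} {𝓝 : FgeModuleL 𝒜 w} (S : 𝓝.Sub) : Prop :=
  ∃ (n : ℕ) (deg : Fin n → GeIdx w) (ξ : ∀ s, 𝓝.N (deg s)),
    (∀ s, ξ s ∈ S.carrier (deg s)) ∧
      ∀ (a : GeIdx w), ∀ x ∈ S.carrier a,
        ∃ f : ∀ s, 𝒜 ((deg s).1 - a.1), x = ∑ s, 𝓝.act (deg s) a (f s) (ξ s)

/-- Core graded Noetherian argument inside the free module `A^n`. -/
theorem fge_core [IsNoetherianRing A] {I : Type} (e : I → ℤ) (n : ℕ) (d : Fin n → ℤ)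
    (T : I → Set (Fin n → A)) (hT : ∀ i, ∀ g ∈ T i, ∀ s, g s ∈ 𝒜 (e i - d s)) :
    ∃ (m : ℕ) (idx : Fin m → I) (g : Fin m → (Fin n → A)), (∀ t, g t ∈ T (idx t)) ∧
      ∀ i, ∀ x ∈ T i, ∃ c : Fin m → A, (∀ t, c t ∈ 𝒜 (e i - e (idx t))) ∧
        ∀ s, x s = ∑ t, c t * g t s := by
  classical
  have hfg : (Submodule.span A (⋃ i, T i)).FG := IsNoetherian.noetherian _
  obtain ⟨F, hF, hspan⟩ := Submodule.fg_span_iff_fg_span_finset_subset _ |>.1 hfg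
  have hmem : ∀ t : Fin F.card, ∃ i, (F.equivFin.symm t : Fin n → A) ∈ T i := fun t => by
    have := hF (F.equivFin.symm t).2
    simpa using this
  choose idx hidx using hmem
  refine ⟨F.card, idx, fun t => (F.equivFin.symm t : Fin n → A), hidx, ?_⟩
  intro i x hx
  have hx' : x ∈ Submodule.span A (Set.range fun t => (F.equivFin.symm t : Fin n → A)) := by
    have h1 : (Set.range fun t => (F.equivFin.symm t : Fin n → A)) = (F : Set (Fin n → A)) := by
      ext y
      constructor
      · rintro ⟨t, rfl⟩
        exact (F.equivFin.symm t).2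
      · intro hy
        exact ⟨F.equivFin ⟨y, hy⟩, by simp⟩
    rw [h1, ← hspan]
    exact Submodule.subset_span (Set.mem_iUnion.2 ⟨i, hx⟩)
  obtain ⟨c, hc⟩ := (Submodule.mem_span_range_iff_exists_fun A).1 hx'
  refine ⟨fun t => (DirectSum.decompose 𝒜 (c t) (e i - e (idx t)) : A),
    fun t => SetLike.coe_mem _, fun s => ?_⟩
  have h2 : x s = ∑ t, c t * (F.equivFin.symm t : Fin n → A) s := by
    rw [← hc]
    simp [Finset.sum_apply]
  have h3 : (DirectSum.decompose 𝒜 (x s) (e i - d s) : A) = x s :=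
    DirectSum.decompose_of_mem_same 𝒜 (hT i x hx s)
  rw [← h3, h2, DirectSum.decompose_sum, DFinsupp.finset_sum_apply, AddSubgroup.val_finset_sum]
  refine Finset.sum_congr rfl fun t _ => ?_
  have h4 := hT _ _ (hidx t) s
  have h5 : e i - d s = (e i - e (idx t)) + (e (idx t) - d s) := by ring
  rw [h5]
  exact DirectSum.coe_decompose_mul_add_of_right_mem 𝒜 h4

/-- The action is additive in the ring element (right modules). -/
theorem FgeModule.act_sum {w : ℤ} (𝓜 : FgeModule 𝒜 w) (i j : GeIdx w) {m : ℕ}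
    (f : Fin m → 𝒜 (i.1 - j.1)) (x : 𝓜.M j) :
    𝓜.act i j (∑ t, f t) x = ∑ t, 𝓜.act i j (f t) x :=
  map_sum (AddMonoidHom.mk' (fun f => 𝓜.act i j f x) (fun f g => 𝓜.act_add i j f g x)) f _

/-- The action is additive in the ring element (left modules). -/
theorem FgeModuleL.act_sum {w : ℤ} (𝓝 : FgeModuleL 𝒜 w) (i j : GeIdx w) {m : ℕ}
    (f : Fin m → 𝒜 (i.1 - j.1)) (x : 𝓝.N i) :
    𝓝.act i j (∑ t, f t) x = ∑ t, 𝓝.act i j (f t) x :=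
  map_sum (AddMonoidHom.mk' (fun f => 𝓝.act i j f x) (fun f g => 𝓝.act_add i j f g x)) f _

theorem fge_right [IsNoetherianRing A] (w : ℤ) (𝓜 : FgeModule 𝒜 w) (hM : 𝓜.IsFG)
    (S : 𝓜.Sub) : S.IsFG := by
  obtain ⟨n, deg, ξ, hξ⟩ := hM
  obtain ⟨m, idx, g, hg, hgen⟩ := fge_core (𝒜 := 𝒜) (fun i : GeIdx w => i.1) n
    (fun s => (deg s).1)
    (fun i => {g | ∃ h : ∀ s, g s ∈ 𝒜 (i.1 - (deg s).1),
      ∑ s, 𝓜.act i (deg s) ⟨g s, h s⟩ (ξ s) ∈ S.carrier i})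
    (fun i g hg => hg.1)
  choose h hS using hg
  refine ⟨m, idx, _, hS, ?_⟩
  intro a x hx
  obtain ⟨f, rfl⟩ := hξ a x
  obtain ⟨c, hc, hsum⟩ := hgen a (fun s => (f s : A)) ⟨fun s => (f s).2, hx⟩
  refine ⟨fun t => ⟨c t, hc t⟩, ?_⟩
  simp only [map_sum, ← FgeModule.act_mul]
  rw [Finset.sum_comm]
  refine Finset.sum_congr rfl fun s _ => ?_
  rw [← FgeModule.act_sum]
  congr 2
  apply Subtype.ext
  rw [AddSubgroup.val_finset_sum]
  exact hsum s

theorem fge_left [IsNoetherianRing A] (w : ℤ) (𝓝 : FgeModuleL 𝒜 w) (hN : 𝓝.IsFG)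
    (S : 𝓝.Sub) : S.IsFG := by
  obtain ⟨n, deg, ξ, hξ⟩ := hN
  have key : ∀ a b : ℤ, -a - -b = b - a := fun a b => by ring
  obtain ⟨m, idx, g, hg, hgen⟩ := fge_core (𝒜 := 𝒜) (fun i : GeIdx w => -i.1) n
    (fun s => -(deg s).1)
    (fun i => {g | ∃ h : ∀ s, g s ∈ 𝒜 ((deg s).1 - i.1),
      ∑ s, 𝓝.act (deg s) i ⟨g s, h s⟩ (ξ s) ∈ S.carrier i})
    (fun i g hg s => by rw [key]; exact hg.1 s)
  choose h hS using hg
  refine ⟨m, idx, _, hS, ?_⟩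
  intro a x hx
  obtain ⟨f, rfl⟩ := hξ a x
  obtain ⟨c, hc, hsum⟩ := hgen a (fun s => (f s : A)) ⟨fun s => (f s).2, hx⟩
  simp only [key] at hc
  refine ⟨fun t => ⟨c t, hc t⟩, ?_⟩
  simp only [map_sum, ← FgeModuleL.act_mul]
  rw [Finset.sum_comm]
  refine Finset.sum_congr rfl fun s _ => ?_
  rw [← FgeModuleL.act_sum]
  congr 2
  apply Subtype.ext
  rw [AddSubgroup.val_finset_sum]
  refine (hsum s).trans (Finset.sum_congr rfl fun t _ => mul_comm _ _)

/-- **Statement 7.**  If the commutative ℤ-graded ring `A` is Noetherian, then the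
pre-additive category `F_{≥w}` is (left and right) Noetherian: every submodule of a
finitely generated right `F_{≥w}`-module is finitely generated, and every submodule of a
finitely generated left `F_{≥w}`-module is finitely generated. -/
theorem fge_noetherian [IsNoetherianRing A] (w : ℤ) :
    (∀ 𝓜 : FgeModule 𝒜 w, 𝓜.IsFG → ∀ S : 𝓜.Sub, S.IsFG) ∧
      (∀ 𝓝 : FgeModuleL 𝒜 w, 𝓝.IsFG → ∀ S : 𝓝.Sub, S.IsFG) := by
  exact ⟨fge_right w, fge_left w⟩
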